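/- Let G be a connected finite simple graph of order n in which every edge lies on at most one cycle (a cactus graph) and which has exactly 6 independent cycles, i.e. |E(G)| = |V(G)| + 5. Then for every natural number x ≥ 4, the number of x-colorings satisfies π(G,x) < (x)↓4·(x−1)^(n−4). -/

import Mathlib

open SimpleGraph Finset

/-!
Write `x = y + 1` and `n = |V(G)|`. In a cactus, deleting an edge `uv` of a cycle turns all the
other edges of that cycle into bridges, so that in `H = G - uv` the vertices `u` and `v` are joined
by a path of at least two bridges. The colorings of `G` are the colorings of `H` with different
colors at `u` and `v`, and a coloring of `H` behaves along a path of bridges like a Markov chain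
that moves to a uniformly chosen different color at each step (`card_eq_across_bridge`): permuting
the colors on one side of a bridge shows that, given the rest, the color of its far end is uniform.
Hence at least the fraction `(y - 1) / y²` of the colorings of `H` agree at `u` and `v`
(`card_eq_along_bridges`; equality holds for a path of three bridges, that is, for a `4`-cycle
of `G`), and so `y² π(G) ≤ (y² - y + 1) π(H)`.

Repeating this for each of the `c` independent cycles, until a tree remains, which has at most
`(y + 1) y ^ (n - 1)` colorings (`chromPoly_le_of_connected`), gives
`y ^ (2c) π(G) ≤ (y² - y + 1) ^ c (y + 1) y ^ (n - 1)` (`cactus_bound`). For `c = 6` the claim thus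
follows from `(y² - y + 1) ^ 6 < y ^ 10 (y - 1) (y - 2)`, which holds for all `y ≥ 3`.
To avoid subtraction, the lemmas use `z = y - 1`, so that `x = z + 2` and `y² - y + 1 = z² + z + 1`.
-/

/-- `chromPoly G x` is the number of proper `x`-colorings of the graph `G`,
i.e. the value `π(G,x)` of the chromatic polynomial at `x`. -/
noncomputable def chromPoly {V : Type} (G : SimpleGraph V) (x : ℕ) : ℕ :=
  Nat.card {f : V → Fin x // ∀ ⦃u v : V⦄, G.Adj u v → f u ≠ f v}

/-- `f` is a proper coloring of `H`. -/
def IsCol {V : Type} {x : ℕ} (H : SimpleGraph V) (f : V → Fin x) : Prop :=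
  ∀ ⦃u v : V⦄, H.Adj u v → f u ≠ f v

/-- The number of proper `x`-colorings of `H` that give `u` and `v` the same color. -/
noncomputable def eqCount {V : Type} (H : SimpleGraph V) (x : ℕ) (u v : V) : ℕ :=
  Nat.card {f : V → Fin x // IsCol H f ∧ f u = f v}

/-- The number of proper `x`-colorings of `H` that give `u` and `v` different colors. -/
noncomputable def neCount {V : Type} (H : SimpleGraph V) (x : ℕ) (u v : V) : ℕ :=
  Nat.card {f : V → Fin x // IsCol H f ∧ f u ≠ f v}

theorem neCount_add_eqCount {V : Type} [Fintype V] (H : SimpleGraph V) (x : ℕ) (u v : V) :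
    neCount H x u v + eqCount H x u v = chromPoly H x := by
  classical
  unfold neCount eqCount chromPoly
  change _ = Nat.card {f : V → Fin x // IsCol H f}
  simp only [Nat.card_eq_fintype_card, Fintype.card_subtype, ← Finset.filter_filter]
  rw [add_comm]
  exact Finset.card_filter_add_card_filter_not _

theorem chromPoly_eq_neCount_deleteEdges {V : Type} (G : SimpleGraph V) (x : ℕ) {u v : V}
    (huv : G.Adj u v) : chromPoly G x = neCount (G.deleteEdges {s(u, v)}) x u v := by
  unfold neCount chromPoly
  refine Nat.card_congr (Equiv.subtypeEquivRight fun f => ?_)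
  constructor
  · intro h
    exact ⟨fun a b hab => h (deleteEdges_le _ hab), h huv⟩
  · rintro ⟨h, hne⟩ a b hab
    by_cases he : s(a, b) = s(u, v)
    · rcases Sym2.eq_iff.1 he with ⟨rfl, rfl⟩ | ⟨rfl, rfl⟩
      · exact hne
      · exact hne.symm
    · exact h ((deleteEdges_adj).2 ⟨hab, by simpa using he⟩)

theorem eqCount_self {V : Type} (H : SimpleGraph V) (x : ℕ) (u : V) :
    eqCount H x u u = chromPoly H x := by
  unfold eqCount chromPoly
  exact Nat.card_congr (Equiv.subtypeEquivRight fun f => by simp [IsCol])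

section Swap

open Classical in
/-- The coloring obtained from `f` by exchanging the colors `c` and `d` on the vertex set `B`. -/
noncomputable def swapOn {V : Type} {x : ℕ} (B : Set V) (c d : Fin x) (f : V → Fin x) :
    V → Fin x :=
  fun w => if w ∈ B then Equiv.swap c d (f w) else f w

theorem swapOn_of_mem {V : Type} {x : ℕ} {B : Set V} {c d : Fin x} {f : V → Fin x} {w : V}
    (hw : w ∈ B) : swapOn B c d f w = Equiv.swap c d (f w) := by simp [swapOn, hw]

theorem swapOn_of_notMem {V : Type} {x : ℕ} {B : Set V} {c d : Fin x} {f : V → Fin x} {w : V}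
    (hw : w ∉ B) : swapOn B c d f w = f w := by simp [swapOn, hw]

theorem swapOn_swapOn {V : Type} {x : ℕ} (B : Set V) (c d : Fin x) (f : V → Fin x) :
    swapOn B c d (swapOn B d c f) = f := by
  funext w
  by_cases hw : w ∈ B
  · rw [swapOn_of_mem hw, swapOn_of_mem hw, Equiv.swap_comm d c, Equiv.swap_apply_self]
  · rw [swapOn_of_notMem hw, swapOn_of_notMem hw]

/-- If `ab` is the only edge leaving `B`, where `b ∈ B`, then recoloring `B` by a transposition
that moves the color of `b` to some `d ≠ f a` keeps the coloring proper. -/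
theorem IsCol.swapOn {V : Type} {x : ℕ} {H : SimpleGraph V} {B : Set V} {a b : V}
    (hcut : ∀ p q, H.Adj p q → p ∈ B → q ∉ B → p = b ∧ q = a)
    {f : V → Fin x} (hf : IsCol H f) {d : Fin x} (hd : d ≠ f a) :
    IsCol H (swapOn B (f b) d f) := by
  intro p q hpq
  by_cases hp : p ∈ B <;> by_cases hq : q ∈ B
  · rw [swapOn_of_mem hp, swapOn_of_mem hq]
    exact fun h => hf hpq ((Equiv.swap _ _).injective h)
  · obtain ⟨rfl, rfl⟩ := hcut p q hpq hp hq
    rw [swapOn_of_mem hp, swapOn_of_notMem hq, Equiv.swap_apply_left]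
    exact hd
  · obtain ⟨rfl, rfl⟩ := hcut q p hpq.symm hq hp
    rw [swapOn_of_mem hq, swapOn_of_notMem hp, Equiv.swap_apply_left]
    exact hd.symm
  · rw [swapOn_of_notMem hp, swapOn_of_notMem hq]
    exact hf hpq

end Swap

/-- Given a coloring of the side of the bridge `ab` that contains `a` and `u`, with
`f u ≠ f a`, the color of `b` is equally likely to be each of the `y` colors other than `f a`,
so that it equals `f u` with probability `1 / y`. -/
theorem card_eq_across_bridge {V : Type} [Fintype V] (H : SimpleGraph V) (y : ℕ) {a b u : V}
    (hab : H.Adj a b) (hbr : H.IsBridge s(a, b))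
    (hu : (H.deleteEdges {s(a, b)}).Reachable u a) :
    y * eqCount H (y + 1) b u = neCount H (y + 1) a u := by
  set B : Set V := {w | (H.deleteEdges {s(a, b)}).Reachable w b} with hB
  have hbB : b ∈ B := Reachable.refl _
  have haB : a ∉ B := fun h => (isBridge_iff.1 hbr) h
  have huB : u ∉ B := fun h => haB (hu.symm.trans h)
  have hcut : ∀ p q, H.Adj p q → p ∈ B → q ∉ B → p = b ∧ q = a := by
    intro p q hpq hp hq
    by_cases he : s(p, q) = s(a, b)
    · rcases Sym2.eq_iff.1 he with ⟨rfl, rfl⟩ | ⟨rfl, rfl⟩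
      · exact absurd hp haB
      · exact ⟨rfl, rfl⟩
    · have : (H.deleteEdges {s(a, b)}).Adj q p :=
        ((deleteEdges_adj).2 ⟨hpq, by simpa using he⟩ : (H.deleteEdges {s(a, b)}).Adj p q).symm
      exact absurd (this.reachable.trans hp) hq
  have hy : Nat.card {d : Fin (y + 1) // d ≠ 0} = y := by
    simp [Nat.card_eq_fintype_card]
  unfold eqCount neCount
  rw [mul_comm]
  conv_lhs => arg 2; rw [← hy]
  rw [← Nat.card_prod]
  -- A coloring `f` with `f b = f u` and a shift `d ≠ 0` give the coloring with color `f a + d`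
  -- at `b`.
  refine Nat.card_congr
    { toFun := fun t => ⟨swapOn B (t.1.1 b) (t.1.1 a + t.2.1) t.1.1, ?_, ?_⟩
      invFun := fun g => ⟨⟨swapOn B (g.1 b) (g.1 u) g.1, ?_, ?_⟩, ⟨g.1 b - g.1 a, ?_⟩⟩
      left_inv := ?_
      right_inv := ?_ }
  · exact t.1.2.1.swapOn hcut (by simpa using t.2.2)
  · rw [swapOn_of_notMem haB, swapOn_of_notMem huB, ← t.1.2.2]
    exact t.1.2.1 hab
  · exact g.2.1.swapOn hcut g.2.2.symm
  · rw [swapOn_of_mem hbB, swapOn_of_notMem huB, Equiv.swap_apply_left]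
  · exact sub_ne_zero.2 (g.2.1 hab).symm
  · rintro ⟨⟨f, hf, hfu⟩, d, hd⟩
    have h1 : swapOn B (f b) (f a + d) f b = f a + d := by
      rw [swapOn_of_mem hbB, Equiv.swap_apply_left]
    have h2 : swapOn B (f b) (f a + d) f u = f b := by
      rw [swapOn_of_notMem huB, hfu]
    have h3 : swapOn B (f b) (f a + d) f a = f a := swapOn_of_notMem haB
    simp only [Prod.mk.injEq, Subtype.mk.injEq]
    rw [h1, h2, h3]
    exact ⟨swapOn_swapOn _ _ _ _, by simp⟩
  · rintro ⟨g, hg, hgu⟩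
    have h1 : swapOn B (g b) (g u) g b = g u := by
      rw [swapOn_of_mem hbB, Equiv.swap_apply_left]
    have h3 : swapOn B (g b) (g u) g a = g a := swapOn_of_notMem haB
    simp only [Subtype.mk.injEq]
    rw [h1, h3, add_sub_cancel]
    exact swapOn_swapOn _ _ _ _

/-- Along a trail of `k ≥ 2` bridges the fraction of colorings that agree at the two ends stays
between `(y - 1) / y²` (its value for `k = 3`) and `1 / y` (its value for `k = 2`), where
`y = z + 1`. For `k = 1` this fraction is `0`. -/
theorem card_eq_along_bridges {V : Type} [Fintype V] (H : SimpleGraph V) (z : ℕ) {u v : V}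
    (q : H.Walk u v) (hq : q.IsTrail) (hbr : ∀ e ∈ q.edges, H.IsBridge e) :
    (q.length = 1 → eqCount H (z + 2) u v = 0) ∧
    (2 ≤ q.length → z * chromPoly H (z + 2) ≤ (z + 1) ^ 2 * eqCount H (z + 2) u v ∧
      (z + 1) * eqCount H (z + 2) u v ≤ chromPoly H (z + 2)) := by
  induction q with
  | nil => simp
  | @cons u w v h q ih =>
    rw [Walk.isTrail_cons] at hq
    obtain ⟨ih1, ih2⟩ := ih hq.1 fun e he => hbr e (by simp [he])
    have hbr' : H.IsBridge s(w, u) := by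
      rw [Sym2.eq_swap]; exact hbr _ (by simp)
    have hreach : (H.deleteEdges {s(w, u)}).Reachable v w := by
      rw [reachable_deleteEdges_iff_exists_walk]
      exact ⟨q.reverse, by simpa [Sym2.eq_swap] using hq.2⟩
    have key := card_eq_across_bridge H (z + 1) h.symm hbr' hreach
    have hsum := neCount_add_eqCount H (z + 2) w v
    rw [show z + 1 + 1 = z + 2 from rfl] at key
    constructor
    · intro hl
      have h0 : q.length = 0 := by simpa using hl
      obtain rfl := Walk.eq_of_length_eq_zero h0
      rw [eqCount_self] at hsum
      have h1 : (z + 1) * eqCount H (z + 2) u w = 0 := by omega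
      simpa using h1
    · intro hl
      simp only [Walk.length_cons] at hl
      rw [← key] at hsum
      generalize eqCount H (z + 2) u v = A at *
      generalize eqCount H (z + 2) w v = A' at *
      generalize chromPoly H (z + 2) = N at *
      refine ⟨?_, by omega⟩
      rcases Nat.lt_or_ge q.length 2 with hlt | hge
      · have := ih1 (by omega)
        subst this
        nlinarith
      · obtain ⟨-, hB⟩ := ih2 hge
        nlinarith

/-- A coloring of a connected graph is determined by the color of a root and, at every other
vertex, the nonzero difference to the color of a neighbor that is closer to the root. -/
theorem chromPoly_le_of_connected {V : Type} [Fintype V] (H : SimpleGraph V) (hH : H.Connected)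
    (y : ℕ) : chromPoly H (y + 1) ≤ (y + 1) * y ^ (Fintype.card V - 1) := by
  classical
  obtain ⟨r⟩ := hH.nonempty
  have hpar : ∀ v : V, v ≠ r → ∃ w, H.Adj v w ∧ H.dist w r < H.dist v r := by
    intro v hv
    obtain ⟨p, hp⟩ := hH.exists_walk_length_eq_dist v r
    cases p with
    | nil => exact absurd rfl hv
    | @cons _ w _ h p =>
      refine ⟨w, h, ?_⟩
      have := H.dist_le p
      simp only [Walk.length_cons] at hp
      omega
  choose par hadj hdist using hpar
  let F : {f : V → Fin (y + 1) // IsCol H f} →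
      Fin (y + 1) × ({v : V // v ≠ r} → {d : Fin (y + 1) // d ≠ 0}) :=
    fun f => (f.1 r, fun v =>
      ⟨f.1 v.1 - f.1 (par v.1 v.2), sub_ne_zero.2 (f.2 (hadj v.1 v.2))⟩)
  have hF : Function.Injective F := by
    rintro ⟨f, hf⟩ ⟨g, hg⟩ hfg
    simp only [F, Prod.mk.injEq] at hfg
    obtain ⟨hr, hd⟩ := hfg
    rw [Subtype.mk.injEq]
    funext v
    induction hk : H.dist v r using Nat.strong_induction_on generalizing v with
    | _ k ih =>
      by_cases hv : v = r
      · rw [hv, hr]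
      · have h1 := congrArg Subtype.val (congrFun hd ⟨v, hv⟩)
        have h2 := ih _ (hk ▸ hdist v hv) (par v hv) rfl
        simp only [h2] at h1
        exact sub_left_injective h1
  have h := Nat.card_le_card_of_injective F hF
  have hy : Nat.card {d : Fin (y + 1) // d ≠ 0} = y := by simp [Nat.card_eq_fintype_card]
  have hV : Nat.card {v : V // v ≠ r} = Fintype.card V - 1 := by
    simp [Nat.card_eq_fintype_card]
  rwa [Nat.card_prod, Nat.card_fun, hy, hV, Nat.card_fin] at h

/-- Any two cycles of `G` with a common edge have the same edges. -/
def IsCactus {V : Type} (G : SimpleGraph V) : Prop :=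
  ∀ (u u' : V) (p : G.Walk u u) (p' : G.Walk u' u'),
    p.IsCycle → p'.IsCycle → ∀ e, e ∈ p.edges → e ∈ p'.edges →
      ∀ e', e' ∈ p.edges ↔ e' ∈ p'.edges

theorem IsCactus.mono {V : Type} {G H : SimpleGraph V} (hHG : H ≤ G) (hG : IsCactus G) :
    IsCactus H := by
  intro u u' p p' hp hp' e he he' e'
  have := hG u u' (p.mapLe hHG) (p'.mapLe hHG) (hp.mapLe hHG) (hp'.mapLe hHG) e
    (by simpa using he) (by simpa using he') e'
  simpa using this

/-- In a cactus, deleting an edge of a cycle turns the other edges of that cycle into bridges. -/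
theorem IsCactus.exists_edge_of_not_isAcyclic {V : Type} {G : SimpleGraph V} (hG : IsCactus G)
    (hcyc : ¬ G.IsAcyclic) :
    ∃ u v, G.Adj u v ∧ ¬ G.IsBridge s(u, v) ∧
      ∃ q : (G.deleteEdges {s(u, v)}).Walk u v, q.IsTrail ∧ 2 ≤ q.length ∧
        ∀ e ∈ q.edges, (G.deleteEdges {s(u, v)}).IsBridge e := by
  simp only [IsAcyclic, not_forall, not_not] at hcyc
  obtain ⟨v, p, hp⟩ := hcyc
  cases p with
  | nil => exact absurd hp (by simp)
  | @cons _ u _ h q =>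
    have hp' := (Walk.cons_isCycle_iff q h).1 hp
    have hnm : s(u, v) ∉ q.edges := by rw [Sym2.eq_swap]; exact hp'.2
    have hlen := hp.three_le_length
    simp only [Walk.length_cons] at hlen
    refine ⟨u, v, h.symm, ?_, q.toDeleteEdges {s(u, v)} (by rintro e he rfl; exact hnm he),
      ?_, ?_, ?_⟩
    · intro hb
      exact hb.notMem_edges_of_isCycle hp (by simp [Sym2.eq_swap])
    · exact (hp'.1.transfer _).isTrail
    · simp only [Walk.toDeleteEdges, Walk.length_transfer]; omega
    · intro e he
      have heH := Walk.edges_subset_edgeSet _ he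
      rw [isBridge_iff_forall_cycle_notMem heH]
      intro w c hc hec
      have hle : G.deleteEdges {s(u, v)} ≤ G := deleteEdges_le _
      simp only [Walk.toDeleteEdges, Walk.edges_transfer] at he
      have h1 := (hG _ _ _ (c.mapLe hle) hp (hc.mapLe hle) e (by simp [he]) (by simpa using hec)
        s(v, u)).1 (by simp)
      rw [Walk.edges_mapLe_eq_edges] at h1
      have := Walk.edges_subset_edgeSet _ h1
      simp [Sym2.eq_swap] at this

theorem card_edgeSet_deleteEdges {V : Type} [Fintype V] (G : SimpleGraph V) {u v : V}
    (huv : G.Adj u v) :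
    Nat.card (G.deleteEdges {s(u, v)}).edgeSet + 1 = Nat.card G.edgeSet := by
  rw [edgeSet_deleteEdges]
  exact Set.ncard_sdiff_singleton_add_one (s := G.edgeSet) huv (Set.toFinite _)

/-- A connected cactus with `c` independent cycles satisfies
`y ^ (2c) π(G) ≤ (y² - y + 1) ^ c (y + 1) y ^ (n - 1)`, where `y = z + 1` and `x = y + 1`. -/
theorem cactus_bound {V : Type} [Fintype V] (z c : ℕ) (G : SimpleGraph V) (hconn : G.Connected)
    (hG : IsCactus G) (hsize : Nat.card G.edgeSet + 1 = Fintype.card V + c) :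
    (z + 1) ^ (2 * c) * chromPoly G (z + 2) ≤
      (z ^ 2 + z + 1) ^ c * ((z + 2) * (z + 1) ^ (Fintype.card V - 1)) := by
  induction c generalizing G with
  | zero => simpa using chromPoly_le_of_connected G hconn (z + 1)
  | succ c ih =>
    have hcyc : ¬ G.IsAcyclic := by
      classical
      intro h
      have := (IsTree.mk hconn h).card_edgeFinset
      rw [edgeFinset_card, ← Nat.card_eq_fintype_card] at this
      omega
    obtain ⟨u, v, huv, hnb, q, hq, hlen, hbr⟩ := hG.exists_edge_of_not_isAcyclic hcyc
    have hcard := card_edgeSet_deleteEdges G huv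
    have hsum := neCount_add_eqCount (G.deleteEdges {s(u, v)}) (z + 2) u v
    rw [← chromPoly_eq_neCount_deleteEdges G _ huv] at hsum
    have hpath := ((card_eq_along_bridges _ z q hq hbr).2 hlen).1
    have hIH := ih (G.deleteEdges {s(u, v)}) (hconn.connected_delete_edge_of_not_isBridge hnb)
      (hG.mono (deleteEdges_le _)) (by omega)
    have hstep : (z + 1) ^ 2 * chromPoly G (z + 2) ≤
        (z ^ 2 + z + 1) * chromPoly (G.deleteEdges {s(u, v)}) (z + 2) := by
      nlinarith
    calc (z + 1) ^ (2 * (c + 1)) * chromPoly G (z + 2)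
        = (z + 1) ^ (2 * c) * ((z + 1) ^ 2 * chromPoly G (z + 2)) := by ring
      _ ≤ (z + 1) ^ (2 * c) *
          ((z ^ 2 + z + 1) * chromPoly (G.deleteEdges {s(u, v)}) (z + 2)) := by gcongr
      _ = (z ^ 2 + z + 1) *
          ((z + 1) ^ (2 * c) * chromPoly (G.deleteEdges {s(u, v)}) (z + 2)) := by ring
      _ ≤ (z ^ 2 + z + 1) *
          ((z ^ 2 + z + 1) ^ c * ((z + 2) * (z + 1) ^ (Fintype.card V - 1))) := by gcongr
      _ = _ := by ring

/-- The inequality `(y² - y + 1) ^ 6 < y ^ 10 (y - 1) (y - 2)` for `y = t + 3`. -/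
theorem poly_ineq (t : ℕ) :
    ((t + 2) ^ 2 + (t + 2) + 1) ^ 6 < (t + 3) ^ 10 * ((t + 2) * (t + 1)) := by
  zify
  rw [← sub_pos]
  -- In powers of `t`, all coefficients of the difference are positive.
  ring_nf
  positivity

/-- **Lemma 3.3.** Let `G` be a connected finite simple graph of order `n` in which every
edge lies on at most one cycle (a cactus graph: any two cycles through a common edge have
the same edge set) and which has exactly `6` independent cycles, i.e.
`|E(G)| = |V(G)| + 5`.  Then for every natural number `x ≥ 4`,
`π(G,x) < (x)↓4 · (x-1)^(n-4)`. -/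
theorem statement_4 {V : Type} [Fintype V] (G : SimpleGraph V) (hconn : G.Connected)
    (hcactus : ∀ (u u' : V) (p : G.Walk u u) (p' : G.Walk u' u'),
      p.IsCycle → p'.IsCycle → ∀ e, e ∈ p.edges → e ∈ p'.edges →
        ∀ e', e' ∈ p.edges ↔ e' ∈ p'.edges)
    (n : ℕ) (hn : Fintype.card V = n)
    (hsize : Nat.card G.edgeSet = n + 5)
    (x : ℕ) (hx : 4 ≤ x) :
    chromPoly G x < x * (x-1) * (x-2) * (x-3) * (x-1) ^ (n - 4) := by
  -- A graph with at most three vertices has at most three edges.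
  have hn4 : 4 ≤ n := by
    classical
    by_contra! hlt
    have h := G.card_edgeFinset_le_card_choose_two
    rw [edgeFinset_card, ← Nat.card_eq_fintype_card, hsize, hn] at h
    interval_cases n <;> simp [Nat.choose] at h
  obtain ⟨k, rfl⟩ := Nat.exists_eq_add_of_le' hn4
  obtain ⟨t, rfl⟩ := Nat.exists_eq_add_of_le' hx
  have hb := cactus_bound (t + 2) 6 G hconn hcactus (by omega)
  rw [hn] at hb
  simp only [show t + 4 - 1 = t + 3 by omega, show t + 4 - 2 = t + 2 by omega,
    show t + 4 - 3 = t + 1 by omega, Nat.add_sub_cancel, show k + 4 - 1 = k + 3 by omega,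
    show t + 2 + 1 = t + 3 by omega, show t + 2 + 2 = t + 4 by omega] at hb ⊢
  refine lt_of_mul_lt_mul_left (a := (t + 3) ^ (2 * 6)) (hb.trans_lt ?_) (Nat.zero_le _)
  calc ((t + 2) ^ 2 + (t + 3)) ^ 6 * ((t + 4) * (t + 3) ^ (k + 3))
      = ((t + 2) ^ 2 + (t + 2) + 1) ^ 6 * ((t + 4) * (t + 3) ^ (k + 3)) := by ring
    _ < (t + 3) ^ 10 * ((t + 2) * (t + 1)) * ((t + 4) * (t + 3) ^ (k + 3)) := by
      gcongr
      exact poly_ineq t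
    _ = (t + 3) ^ (2 * 6) * ((t + 4) * (t + 3) * (t + 2) * (t + 1) * (t + 3) ^ k) := by ring
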